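/- (Differentiation rule, Theorem 4.5, Fourier form.) Let n ≥ 3 be an integer, μ > 1 real, and r an integer with 1 ≤ r ≤ n − 2. Then for every integer m ≥ 1 and every ω ∈ ℝ, (iω)^r · Φ^{(n,m)}(ω) = ( 2^m (1 − e^{-iω 2^{-m}}) )^r · Φ^{(n-r,m)}(ω); and for m = 0, (iω)^r · Φ^{(n,0)}(ω) = ( 2 (1 − e^{-iω/2}) )^r · Φ^{(n-r,0)}(ω). Equivalently, in the time domain D^r φ^{(n,m)} = ∇^r_{h} φ^{(n-r,m)} with backward difference step h = 2^{-m} for m ≥ 1 and h = 2^{-1} for m = 0. -/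

import Mathlib

open MeasureTheory Filter Complex

/-- Binomial coefficient `binom p q` extended to integer `q`, zero outside `0 ≤ q ≤ p`. -/
noncomputable def binomZ (p : ℕ) (q : ℤ) : ℝ :=
  if 0 ≤ q then (p.choose q.toNat : ℝ) else 0

/-- The nonstationary mask `a^{(n,m)}_α` with tension parameter `μ`. -/
noncomputable def maskNS (n m : ℕ) (μ : ℝ) (α : ℤ) : ℝ :=
  if m = 0 then (if α = 0 ∨ α = 1 then 1/2 else 0)
  else if 0 ≤ α ∧ α ≤ (n : ℤ) + 1 then
    (2 : ℝ) ^ (-((n : ℝ) + 1 + (m : ℝ) ^ (-μ))) *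
      (binomZ (n+1) α + 4 * ((2 : ℝ) ^ ((m : ℝ) ^ (-μ)) - 1) * binomZ (n-1) (α-1))
  else 0

/-- The symbol `A^{(n,m)}(z) = Σ_{α=0}^{n+1} a^{(n,m)}_α z^α`. -/
noncomputable def symbolNS (n m : ℕ) (μ : ℝ) (z : ℂ) : ℂ :=
  ∑ α ∈ Finset.range (n+2), (maskNS n m μ (α : ℤ) : ℂ) * z ^ α

/-- Partial product `∏_{k=m}^{N-1} A^{(n,k)}(e^{-iω/2^{k+1}})` of the infinite product
defining the Fourier transform `Φ^{(n,m)}` of the refinable ripplet `φ^{(n,m)}`. -/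
noncomputable def partialProdNS (n m : ℕ) (μ : ℝ) (ω : ℝ) (N : ℕ) : ℂ :=
  ∏ k ∈ Finset.Ico m N, symbolNS n k μ (Complex.exp (-(Complex.I * ω) / 2 ^ (k + 1)))

/-!
For `n, k ≥ 1` the symbols of consecutive orders differ by a B-spline factor,
`A^{(n+1,k)}(z) = (1 + z)/2 · A^{(n,k)}(z)`, while `A^{(n,0)}` is independent of `n`. At
`z = e^{-iω/2^{k+1}}` these factors telescope, because `1 - w² = (1 - w)(1 + w)`: their product
over `m ≤ k < N` is the quotient of `2^m (1 - e^{-iω/2^m})` by `2^N (1 - e^{-iω/2^N})`. The latter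
tends to `iω` as `N → ∞`.
-/

open Finset Topology

lemma binomZ_natCast (p k : ℕ) : binomZ p k = p.choose k := by
  simp [binomZ]

lemma sum_range_binomZ_mul_pow (p : ℕ) (z : ℂ) :
    ∑ α ∈ range (p + 1), (binomZ p α : ℂ) * z ^ α = (1 + z) ^ p := by
  simp [binomZ_natCast, add_comm 1 z, add_pow, mul_comm]

lemma sum_range_binomZ_sub_one_mul_pow (p : ℕ) (z : ℂ) :
    ∑ α ∈ range (p + 2), (binomZ p (α - 1) : ℂ) * z ^ α = z * (1 + z) ^ p := by
  have binomZ_neg_one : binomZ p ((0 : ℕ) - 1) = 0 := by simp [binomZ]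
  rw [sum_range_succ', binomZ_neg_one, ← sum_range_binomZ_mul_pow, mul_sum]
  simp only [Nat.cast_succ, add_sub_cancel_right, ofReal_zero, zero_mul, add_zero]
  exact sum_congr rfl fun α _ => by ring

lemma symbolNS_zero (n : ℕ) (μ : ℝ) (z : ℂ) : symbolNS n 0 μ z = (1 + z) / 2 := by
  have mask_eq_half {α : ℕ} (hα : α ≤ 1) : maskNS n 0 μ α = 1 / 2 := by
    rw [maskNS, if_pos rfl, if_pos (by omega)]
  have mask_eq_zero (α : ℕ) : maskNS n 0 μ (α + 1 + 1 : ℕ) = 0 := by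
    rw [maskNS, if_pos rfl, if_neg (by omega)]
  rw [symbolNS, sum_range_succ', sum_range_succ', sum_eq_zero fun α _ => by
    rw [mask_eq_zero, ofReal_zero, zero_mul], mask_eq_half le_rfl, mask_eq_half zero_le_one]
  push_cast
  ring

section PositiveLevel

variable {m : ℕ} (μ : ℝ) (z : ℂ)

lemma maskNS_succ_of_le (hm : m ≠ 0) {p α : ℕ} (hα : α ≤ p + 2) :
    maskNS (p + 1) m μ α = 2 ^ (-((p : ℝ) + 2 + (m : ℝ) ^ (-μ))) *
      (binomZ (p + 2) α + 4 * (2 ^ (m : ℝ) ^ (-μ) - 1) * binomZ p (α - 1)) := by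
  rw [maskNS, if_neg hm, if_pos (by omega), Nat.add_sub_cancel]
  push_cast
  ring_nf

lemma symbolNS_succ (hm : m ≠ 0) (p : ℕ) :
    symbolNS (p + 1) m μ z = ((2 : ℝ) ^ (-((p : ℝ) + 2 + (m : ℝ) ^ (-μ))) : ℝ) *
      ((1 + z) ^ (p + 2) +
        4 * (((2 : ℝ) ^ (m : ℝ) ^ (-μ) - 1 : ℝ) : ℂ) * (z * (1 + z) ^ p)) := by
  have sum_shift : ∑ α ∈ range (p + 3), (binomZ p (α - 1) : ℂ) * z ^ α = z * (1 + z) ^ p := by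
    have top_eq_zero : binomZ p ((p + 2 : ℕ) - 1) = 0 := by
      rw [show ((p + 2 : ℕ) : ℤ) - 1 = (p + 1 : ℕ) by omega, binomZ_natCast,
        Nat.choose_succ_self, Nat.cast_zero]
    rw [sum_range_succ, top_eq_zero, ofReal_zero, zero_mul, add_zero,
      sum_range_binomZ_sub_one_mul_pow]
  rw [← sum_shift, ← sum_range_binomZ_mul_pow, mul_sum, ← sum_add_distrib, mul_sum, symbolNS]
  refine sum_congr rfl fun α hα => ?_
  rw [maskNS_succ_of_le μ hm (by simpa [Nat.lt_succ_iff] using hα)]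
  push_cast
  ring

lemma symbolNS_add_two (hm : m ≠ 0) (p : ℕ) :
    symbolNS (p + 2) m μ z = (1 + z) / 2 * symbolNS (p + 1) m μ z := by
  have scale : (2 : ℝ) ^ (-(((p + 1 : ℕ) : ℝ) + 2 + (m : ℝ) ^ (-μ))) =
      2 ^ (-((p : ℝ) + 2 + (m : ℝ) ^ (-μ))) / 2 := by
    rw [← Real.rpow_sub_one two_ne_zero]
    push_cast
    ring_nf
  rw [symbolNS_succ μ z hm (p + 1), symbolNS_succ μ z hm p, scale]
  push_cast
  ring

lemma symbolNS_eq_pow_mul (hm : m ≠ 0) {n r : ℕ} (hr : r < n) :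
    symbolNS n m μ z = ((1 + z) / 2) ^ r * symbolNS (n - r) m μ z := by
  obtain ⟨p, rfl⟩ := Nat.exists_eq_add_of_lt hr
  rw [show r + p + 1 = p + r + 1 by ring, show p + r + 1 - r = p + 1 by omega]
  clear hr
  induction r with
  | zero => simp
  | succ r ih => rw [← add_assoc p, symbolNS_add_two μ z hm, ih, pow_succ', mul_assoc]

end PositiveLevel

/-- The Fourier multiplier, at `s = iω`, of the backward difference `∇_h` with `h = 2^{-j}`. -/
noncomputable def dyadicDifference (j : ℕ) (s : ℂ) : ℂ :=
  2 ^ j * (1 - exp (-s / 2 ^ j))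

lemma dyadicDifference_succ_mul (j : ℕ) (s : ℂ) :
    dyadicDifference (j + 1) s * ((1 + exp (-s / 2 ^ (j + 1))) / 2) = dyadicDifference j s := by
  have exp_sq : exp (-s / 2 ^ j) = exp (-s / 2 ^ (j + 1)) ^ 2 := by
    rw [← exp_nat_mul, pow_succ]
    congr 1
    push_cast
    field_simp
  rw [dyadicDifference, dyadicDifference, exp_sq]
  ring

lemma dyadicDifference_mul_prod {m N : ℕ} (h : m ≤ N) (s : ℂ) :
    dyadicDifference N s * ∏ k ∈ Ico m N, (1 + exp (-s / 2 ^ (k + 1))) / 2 =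
      dyadicDifference m s := by
  induction N, h using Nat.le_induction with
  | base => simp
  | succ N h ih => rw [prod_Ico_succ_top h, mul_left_comm, dyadicDifference_succ_mul, mul_comm, ih]

lemma tendsto_dyadicDifference (s : ℂ) :
    Tendsto (fun N => dyadicDifference N s) atTop (𝓝 s) := by
  have norm_tendsto : Tendsto (fun N : ℕ => ‖(2 : ℂ) ^ N‖) atTop atTop := by
    simpa using tendsto_pow_atTop_atTop_of_one_lt (one_lt_two (α := ℝ))
  have slope := (hasDerivAt_exp 0).hasFDerivAt.lim (-s) norm_tendsto
  simpa [dyadicDifference, div_eq_inv_mul, mul_sub] using slope.neg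

lemma pow_mul_eq_dyadicDifference_pow_mul_of_tendsto {P Q : ℕ → ℂ} {a b s : ℂ} {m r : ℕ}
    (hP : Tendsto P atTop (𝓝 a)) (hQ : Tendsto Q atTop (𝓝 b))
    (hPQ : ∀ N ≥ m, P N = (∏ k ∈ Ico m N, (1 + exp (-s / 2 ^ (k + 1))) / 2) ^ r * Q N) :
    s ^ r * a = dyadicDifference m s ^ r * b := by
  refine tendsto_nhds_unique (((tendsto_dyadicDifference s).pow r).mul hP)
    ((hQ.const_mul _).congr' ?_)
  filter_upwards [eventually_ge_atTop m] with N hN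
  rw [hPQ N hN, ← mul_assoc, ← mul_pow, dyadicDifference_mul_prod hN]

section PartialProducts

variable {n r : ℕ} (μ ω : ℝ)

lemma partialProdNS_eq_prod_pow_mul (hr : r < n) {m : ℕ} (hm : 1 ≤ m) (N : ℕ) :
    partialProdNS n m μ ω N =
      (∏ k ∈ Ico m N, (1 + exp (-(I * ω) / 2 ^ (k + 1))) / 2) ^ r *
        partialProdNS (n - r) m μ ω N := by
  rw [partialProdNS, partialProdNS, ← prod_pow, ← prod_mul_distrib]
  refine prod_congr rfl fun k hk => symbolNS_eq_pow_mul μ _ ?_ hr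
  exact Nat.ne_of_gt (hm.trans (mem_Ico.1 hk).1)

lemma partialProdNS_zero (n : ℕ) {N : ℕ} (hN : 1 ≤ N) :
    partialProdNS n 0 μ ω N =
      (1 + exp (-(I * ω) / 2 ^ (0 + 1))) / 2 * partialProdNS n 1 μ ω N := by
  rw [partialProdNS, prod_eq_prod_Ico_succ_bot hN, symbolNS_zero, partialProdNS]

lemma partialProdNS_zero_eq_prod_pow_mul (hr : r < n) {N : ℕ} (hN : 1 ≤ N) :
    partialProdNS n 0 μ ω N =
      (∏ k ∈ Ico 1 N, (1 + exp (-(I * ω) / 2 ^ (k + 1))) / 2) ^ r *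
        partialProdNS (n - r) 0 μ ω N := by
  rw [partialProdNS_zero μ ω n hN, partialProdNS_zero μ ω (n - r) hN,
    partialProdNS_eq_prod_pow_mul μ ω hr le_rfl, mul_left_comm]

end PartialProducts

theorem differentiation_rule_general (n r : ℕ) (hr : r < n) (μ : ℝ) (Φ Φr : ℕ → ℝ → ℂ)
    (hΦ : ∀ m : ℕ, ∀ ω : ℝ,
      Tendsto (fun N => partialProdNS n m μ ω N) atTop (𝓝 (Φ m ω)))
    (hΦr : ∀ m : ℕ, ∀ ω : ℝ,
      Tendsto (fun N => partialProdNS (n - r) m μ ω N) atTop (𝓝 (Φr m ω))) :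
    (∀ m : ℕ, 1 ≤ m → ∀ ω : ℝ,
      (I * ω) ^ r * Φ m ω =
        ((2 : ℂ) ^ m * (1 - exp (-(I * ω) * 2 ^ (-(m : ℤ))))) ^ r * Φr m ω) ∧
    (∀ ω : ℝ,
      (I * ω) ^ r * Φ 0 ω = (2 * (1 - exp (-(I * ω) / 2))) ^ r * Φr 0 ω) := by
  refine ⟨fun m hm ω => ?_, fun ω => ?_⟩
  · rw [zpow_neg, zpow_natCast, ← div_eq_mul_inv]
    exact pow_mul_eq_dyadicDifference_pow_mul_of_tendsto (hΦ m ω) (hΦr m ω)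
      fun N _ => partialProdNS_eq_prod_pow_mul μ ω hr hm N
  · have rule := pow_mul_eq_dyadicDifference_pow_mul_of_tendsto (hΦ 0 ω) (hΦr 0 ω)
      fun N hN => partialProdNS_zero_eq_prod_pow_mul μ ω hr hN
    simpa only [dyadicDifference, pow_one] using rule

/-- Differentiation rule (Theorem 4.5, Fourier form): for `1 ≤ r ≤ n − 2`,
`(iω)^r Φ^{(n,m)}(ω) = (2^m (1 − e^{-iω2^{-m}}))^r Φ^{(n-r,m)}(ω)` for `m ≥ 1`, and
`(iω)^r Φ^{(n,0)}(ω) = (2 (1 − e^{-iω/2}))^r Φ^{(n-r,0)}(ω)`. -/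
theorem differentiation_rule (n : ℕ) (hn : 3 ≤ n) (μ : ℝ) (hμ : 1 < μ)
    (r : ℕ) (hr1 : 1 ≤ r) (hr2 : r ≤ n - 2)
    (Φ Φr : ℕ → ℝ → ℂ)
    (hΦ : ∀ m : ℕ, ∀ ω : ℝ,
      Tendsto (fun N => partialProdNS n m μ ω N) atTop (nhds (Φ m ω)))
    (hΦr : ∀ m : ℕ, ∀ ω : ℝ,
      Tendsto (fun N => partialProdNS (n - r) m μ ω N) atTop (nhds (Φr m ω))) :
    (∀ m : ℕ, 1 ≤ m → ∀ ω : ℝ,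
      (Complex.I * ω) ^ r * Φ m ω =
        ((2 : ℂ) ^ m * (1 - Complex.exp (-(Complex.I * ω) * 2 ^ (-(m : ℤ))))) ^ r * Φr m ω) ∧
    (∀ ω : ℝ,
      (Complex.I * ω) ^ r * Φ 0 ω =
        (2 * (1 - Complex.exp (-(Complex.I * ω) / 2))) ^ r * Φr 0 ω) :=
  differentiation_rule_general n r (by omega) μ Φ Φr hΦ hΦr
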